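/- arXiv:2212.09889 — 2 statements merged into one kernel-verified Lean document; each statement's English description precedes it below -/
import Mathlib

section
/- In the Gaussian signal model with the myopic-play dynamics: let S_a, S_b be nondegenerate closed intervals with myopic thresholds m_a = σ_a(S_b), m_b = σ_b(S_a), suppose m_a > inf S_a, m_b < sup S_b, and m_b ∈ Int S_b, and suppose player a plays −1 while player b plays +1, so that the updated belief sets are S'_a = [inf S_a, min{m_a, sup S_a}] and S'_b = [m_b, sup S_b]. Then the updated threshold m'_a = σ_a(S'_b) satisfies m'_a < min{m_a, sup S_a}, and exactly one of the following holds: (i) m'_a ∈ Int S'_a; or (ii) m'_a ≤ inf S'_a and m'_b = σ_b(S'_a) = m_b = inf S'_b, in which case every type pair in Int S'_a × Int S'_b plays the common action +1 at the next date; or (iii) m'_a ≤ inf S'_a and m'_b ∈ Int S'_b. -/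
/-!
The conditional expectation `Ea s [x, y]` has the sign of `∫ u in x..y, (s α + u β) g(u - ρ s)`, where
`g` is a centred Gaussian density and `α = σb²`, `β = σa²`, `ρ > 0`. Three facts about this integral
carry the proof.

* A zero of the integral forces the affine factor `s α + u β` to change sign inside `(x, y)`
  (`neg_left_of_zero`, `pos_right_of_zero`). This bounds each threshold by the endpoints of the
  belief sets: `m'a < ua`, and `m'b < ub` when `m'a ≤ la`.
* Single crossing in `s` (`pos_of_nonneg`): since the Gaussian family has the monotone likelihood
  ratio property, raising `s` tilts the density by an increasing exponential, so an integral which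
  is nonnegative at `s` is positive at every `t > s`. In particular thresholds are unique.
* Truncating the interval from below (above) removes negative (positive) mass and so strictly lowers
  (raises) the threshold (`zero_lt_of_truncate_left`, `lt_zero_of_truncate_right`).

Uniqueness gives `m'b = mb` when `min ma ua = ua`; truncation gives `m'a < ma`, and `mb < m'b` when
`ma < ua`. The model is symmetric in the players (`Eb_eq_Ea`), so everything is proved for `Ea` only.
-/


open MeasureTheory Set Filter

noncomputable section

/-- Posterior mean of the state given both signal values in the Gaussian model. -/
def postMean (σ σa σb sa sb : ℝ) : ℝ :=
  σ ^ 2 * (sa * σb ^ 2 + sb * σa ^ 2) / (σa ^ 2 * σb ^ 2 + σ ^ 2 * (σa ^ 2 + σb ^ 2))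

/-- Conditional density of player `b`'s signal given player `a`'s signal `sa`. -/
def phi (σ σa σb sa u : ℝ) : ℝ :=
  Real.exp (-(u - sa * σ ^ 2 / (σ ^ 2 + σa ^ 2)) ^ 2 /
      (2 * ((σa ^ 2 * σb ^ 2 + σ ^ 2 * (σa ^ 2 + σb ^ 2)) / (σ ^ 2 + σa ^ 2)))) /
    Real.sqrt (2 * Real.pi * ((σa ^ 2 * σb ^ 2 + σ ^ 2 * (σa ^ 2 + σb ^ 2)) / (σ ^ 2 + σa ^ 2)))

/-- Conditional expectation of the state given `sa` and the event `s_b ∈ S`. -/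
def Ea (σ σa σb : ℝ) (sa : ℝ) (S : Set ℝ) : ℝ :=
  (∫ u in S, postMean σ σa σb sa u * phi σ σa σb sa u) / ∫ u in S, phi σ σa σb sa u

/-- The same conditional expectation from player `b`'s side. -/
def Eb (σ σa σb : ℝ) (sb : ℝ) (S : Set ℝ) : ℝ :=
  (∫ u in S, postMean σ σa σb u sb * phi σ σb σa sb u) / ∫ u in S, phi σ σb σa sb u

/-- Up to a positive constant factor, the integrand in the numerator of `Ea`: here `s` is the
player's own signal, `u` the opponent's signal, `s * α + u * β` is proportional to the posterior mean,
and `v` is the conditional variance of `u`. -/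
def kern (α β ρ v s u : ℝ) : ℝ :=
  (s * α + u * β) * Real.exp (-(u - s * ρ) ^ 2 / (2 * v))

lemma kern_continuous (α β ρ v s : ℝ) : Continuous (kern α β ρ v s) := by
  unfold kern; fun_prop

lemma kern_ii (α β ρ v s x y : ℝ) : IntervalIntegrable (kern α β ρ v s) volume x y :=
  (kern_continuous α β ρ v s).intervalIntegrable x y

lemma integral_kern_pos {α β ρ v s x y : ℝ} (hβ : 0 < β) (hxy : x < y)
    (h : 0 ≤ s * α + x * β) : 0 < ∫ u in x..y, kern α β ρ v s u := by
  apply intervalIntegral.intervalIntegral_pos_of_pos_on (kern_ii _ _ _ _ _ _ _) _ hxy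
  intro u hu
  have := mul_lt_mul_of_pos_right hu.1 hβ
  exact mul_pos (by linarith) (Real.exp_pos _)

lemma integral_kern_neg {α β ρ v s x y : ℝ} (hβ : 0 < β) (hxy : x < y)
    (h : s * α + y * β ≤ 0) : ∫ u in x..y, kern α β ρ v s u < 0 := by
  have h1 : 0 < ∫ u in x..y, -kern α β ρ v s u := by
    apply intervalIntegral.intervalIntegral_pos_of_pos_on (kern_ii _ _ _ _ _ _ _).neg _ hxy
    intro u hu
    have := mul_lt_mul_of_pos_right hu.2 hβ
    exact neg_pos.2 (mul_neg_of_neg_of_pos (by linarith) (Real.exp_pos _))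
  rw [intervalIntegral.integral_neg] at h1
  linarith

lemma neg_left_of_zero {α β ρ v s x y : ℝ} (hβ : 0 < β) (hxy : x < y)
    (h : ∫ u in x..y, kern α β ρ v s u = 0) : s * α + x * β < 0 := by
  by_contra! hc
  exact (integral_kern_pos hβ hxy hc).ne' h

lemma pos_right_of_zero {α β ρ v s x y : ℝ} (hβ : 0 < β) (hxy : x < y)
    (h : ∫ u in x..y, kern α β ρ v s u = 0) : 0 < s * α + y * β := by
  by_contra! hc
  exact (integral_kern_neg hβ hxy hc).ne h

/-- Single crossing in the player's own signal. -/
lemma pos_of_nonneg {α β ρ v s t x y : ℝ} (hα : 0 < α) (hβ : 0 < β) (hρ : 0 < ρ) (hv : 0 < v)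
    (hxy : x < y) (hst : s < t) (h : 0 ≤ ∫ u in x..y, kern α β ρ v s u) :
    0 < ∫ u in x..y, kern α β ρ v t u := by
  -- The likelihood ratio of the signals `t` and `s` is `C * exp (k * u)`, increasing in `u`;
  -- `c` is the root of the affine factor `s * α + u * β`.
  set k : ℝ := (t - s) * ρ / v with hk
  set C : ℝ := Real.exp ((s ^ 2 - t ^ 2) * ρ ^ 2 / (2 * v)) with hC
  set c : ℝ := -(s * α) / β with hc
  have hk0 : 0 < k := by have := sub_pos.2 hst; positivity
  have hratio : ∀ u, Real.exp (-(u - t * ρ) ^ 2 / (2 * v)) =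
      C * Real.exp (k * u) * Real.exp (-(u - s * ρ) ^ 2 / (2 * v)) := by
    intro u
    rw [hC, ← Real.exp_add, ← Real.exp_add, hk]
    congr 1
    field_simp
    ring
  have hlt : ∀ u, C * Real.exp (k * c) * kern α β ρ v s u < kern α β ρ v t u := by
    intro u
    have hE := Real.exp_pos (-(u - s * ρ) ^ 2 / (2 * v))
    have hC0 : 0 < C := Real.exp_pos _
    have hsu : s * α + u * β = β * (u - c) := by rw [hc]; field_simp; ring
    have h1 : 0 ≤ (u - c) * (Real.exp (k * u) - Real.exp (k * c)) := by
      rcases le_total c u with hu | hu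
      · exact mul_nonneg (by linarith)
          (sub_nonneg.2 (Real.exp_le_exp.2 (mul_le_mul_of_nonneg_left hu hk0.le)))
      · exact mul_nonneg_of_nonpos_of_nonpos (by linarith)
          (sub_nonpos.2 (Real.exp_le_exp.2 (mul_le_mul_of_nonneg_left hu hk0.le)))
    have h2 : 0 ≤ C * Real.exp (-(u - s * ρ) ^ 2 / (2 * v)) * β *
        ((u - c) * (Real.exp (k * u) - Real.exp (k * c))) := by positivity
    have h3 : 0 < (t - s) * α *
        (C * Real.exp (k * u) * Real.exp (-(u - s * ρ) ^ 2 / (2 * v))) := by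
      have := sub_pos.2 hst; positivity
    unfold kern
    rw [hratio u, show t * α + u * β = (t - s) * α + β * (u - c) by rw [← hsu]; ring, hsu]
    linarith
  have h4 : 0 < ∫ u in x..y, (kern α β ρ v t u - C * Real.exp (k * c) * kern α β ρ v s u) :=
    intervalIntegral.intervalIntegral_pos_of_pos_on
      ((kern_ii _ _ _ _ _ _ _).sub ((kern_ii _ _ _ _ _ _ _).const_mul _))
      (fun u _ => sub_pos.2 (hlt u)) hxy
  rw [intervalIntegral.integral_sub (kern_ii _ _ _ _ _ _ _)
    ((kern_ii _ _ _ _ _ _ _).const_mul _), intervalIntegral.integral_const_mul] at h4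
  have h5 : 0 ≤ C * Real.exp (k * c) * ∫ u in x..y, kern α β ρ v s u :=
    mul_nonneg (by positivity) h
  linarith

lemma zero_unique {α β ρ v s t x y : ℝ} (hα : 0 < α) (hβ : 0 < β) (hρ : 0 < ρ) (hv : 0 < v)
    (hxy : x < y) (hs : ∫ u in x..y, kern α β ρ v s u = 0)
    (ht : ∫ u in x..y, kern α β ρ v t u = 0) : s = t := by
  rcases lt_trichotomy s t with h | h | h
  · exact absurd ht (pos_of_nonneg hα hβ hρ hv hxy h hs.ge).ne'
  · exact h
  · exact absurd hs (pos_of_nonneg hα hβ hρ hv hxy h ht.ge).ne'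

/-- Truncating the belief interval from below strictly lowers the threshold. -/
lemma zero_lt_of_truncate_left {α β ρ v s t x z y : ℝ} (hα : 0 < α) (hβ : 0 < β) (hρ : 0 < ρ)
    (hv : 0 < v) (hxz : x < z) (hzy : z < y) (hs : ∫ u in x..y, kern α β ρ v s u = 0)
    (ht : ∫ u in z..y, kern α β ρ v t u = 0) : t < s := by
  have h1 : ∫ u in x..z, kern α β ρ v t u < 0 :=
    integral_kern_neg hβ hxz (neg_left_of_zero hβ hzy ht).le
  have h2 := intervalIntegral.integral_add_adjacent_intervals
    (kern_ii α β ρ v t x z) (kern_ii α β ρ v t z y)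
  by_contra! hc
  rcases hc.eq_or_lt with rfl | hc
  · linarith
  · linarith [pos_of_nonneg hα hβ hρ hv (hxz.trans hzy) hc hs.ge]

/-- Truncating the belief interval from above strictly raises the threshold. -/
lemma lt_zero_of_truncate_right {α β ρ v s t x z y : ℝ} (hα : 0 < α) (hβ : 0 < β) (hρ : 0 < ρ)
    (hv : 0 < v) (hxz : x < z) (hzy : z < y) (hs : ∫ u in x..y, kern α β ρ v s u = 0)
    (ht : ∫ u in x..z, kern α β ρ v t u = 0) : s < t := by
  have h1 : 0 < ∫ u in z..y, kern α β ρ v t u :=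
    integral_kern_pos hβ hzy (pos_right_of_zero hβ hxz ht).le
  have h2 := intervalIntegral.integral_add_adjacent_intervals
    (kern_ii α β ρ v t x z) (kern_ii α β ρ v t z y)
  by_contra! hc
  rcases hc.eq_or_lt with rfl | hc
  · linarith
  · linarith [pos_of_nonneg hα hβ hρ hv (hxz.trans hzy) hc (by linarith)]

lemma Eb_eq_Ea (σ σa σb s : ℝ) (S : Set ℝ) : Eb σ σa σb s S = Ea σ σb σa s S := by
  have h : ∀ u, postMean σ σa σb u s = postMean σ σb σa s u := by
    intro u
    unfold postMean
    congr 1 <;> ring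
  simp only [Eb, Ea, h]

/-- The conditional variance of the opponent's signal. -/
def condVar (σ σa σb : ℝ) : ℝ :=
  (σa ^ 2 * σb ^ 2 + σ ^ 2 * (σa ^ 2 + σb ^ 2)) / (σ ^ 2 + σa ^ 2)

/-- A zero of `Ea` on a nondegenerate interval is a zero of the normalised numerator, because the
probability in the denominator is positive. -/
lemma integral_kern_eq_zero {σ σa σb s x y : ℝ} (hσ : 0 < σ) (hσa : 0 < σa) (hσb : 0 < σb)
    (hxy : x < y) (h : Ea σ σa σb s (Icc x y) = 0) :
    ∫ u in x..y, kern (σb ^ 2) (σa ^ 2) (σ ^ 2 / (σ ^ 2 + σa ^ 2)) (condVar σ σa σb) s u = 0 := by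
  have hphi : ∀ u, 0 < phi σ σa σb s u := by
    intro u; unfold phi; positivity
  have hphic : Continuous (phi σ σa σb s) := by
    unfold phi; fun_prop
  have hden : 0 < ∫ u in x..y, phi σ σa σb s u :=
    intervalIntegral.intervalIntegral_pos_of_pos_on (hphic.intervalIntegrable _ _)
      (fun u _ => hphi u) hxy
  set K : ℝ := σ ^ 2 / (σa ^ 2 * σb ^ 2 + σ ^ 2 * (σa ^ 2 + σb ^ 2)) /
    Real.sqrt (2 * Real.pi * condVar σ σa σb) with hK
  have hK0 : 0 < K := by rw [hK]; unfold condVar; positivity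
  have hnum : ∀ u, postMean σ σa σb s u * phi σ σa σb s u =
      K * kern (σb ^ 2) (σa ^ 2) (σ ^ 2 / (σ ^ 2 + σa ^ 2)) (condVar σ σa σb) s u := by
    intro u
    unfold postMean phi kern
    rw [hK, ← condVar, ← mul_div_assoc s]
    ring
  unfold Ea at h
  simp only [integral_Icc_eq_integral_Ioc, ← intervalIntegral.integral_of_le hxy.le, hnum] at h
  rw [intervalIntegral.integral_const_mul] at h
  rcases div_eq_zero_iff.1 h with h | h
  · exact (mul_eq_zero.1 h).resolve_left hK0.ne'
  · exact absurd h hden.ne'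

/-- one step of the myopic-play dynamics after disagreement `(-1, +1)`,
with `S_a = [la, ua]`, `S_b = [lb, ub]`, thresholds `m_a, m_b`, hypotheses
`m_a > inf S_a`, `m_b < sup S_b`, `m_b ∈ Int S_b`, and updated sets
`S'_a = [la, min m_a ua]`, `S'_b = [m_b, ub]` with new thresholds `m'_a, m'_b`.
Then `m'_a < min m_a ua`, and exactly one of (i) `m'_a ∈ Int S'_a`,
(ii) `m'_a ≤ inf S'_a` and `m'_b = m_b = inf S'_b` (in which case every type pair in
`Int S'_a × Int S'_b` plays the common action `+1` next date), or
(iii) `m'_a ≤ inf S'_a` and `m'_b ∈ Int S'_b` holds. -/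
theorem stmt8 (σ σa σb : ℝ) (hσ : 0 < σ) (hσa : 0 < σa) (hσb : 0 < σb)
    (la ua lb ub ma mb m'a m'b : ℝ) (hSa : la < ua) (hSb : lb < ub)
    (hma : Ea σ σa σb ma (Icc lb ub) = 0) (hmb : Eb σ σa σb mb (Icc la ua) = 0)
    (hma' : la < ma) (hmb' : mb < ub) (hmbInt : lb < mb)
    (hm'a : Ea σ σa σb m'a (Icc mb ub) = 0)
    (hm'b : Eb σ σa σb m'b (Icc la (min ma ua)) = 0) :
    m'a < min ma ua ∧
    ((la < m'a ∧
        ¬(m'a ≤ la ∧ m'b = mb) ∧ ¬(m'a ≤ la ∧ mb < m'b ∧ m'b < ub)) ∨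
     ((m'a ≤ la ∧ m'b = mb ∧
        (∀ sa sb : ℝ, sa ∈ Ioo la (min ma ua) → sb ∈ Ioo mb ub → m'a < sa ∧ m'b < sb)) ∧
        ¬(la < m'a) ∧ ¬(m'a ≤ la ∧ mb < m'b ∧ m'b < ub)) ∨
     ((m'a ≤ la ∧ mb < m'b ∧ m'b < ub) ∧
        ¬(la < m'a) ∧ ¬(m'a ≤ la ∧ m'b = mb))) := by
  rw [Eb_eq_Ea] at hmb hm'b
  have hmin : la < min ma ua := lt_min hma' hSa
  have hα : 0 < σb ^ 2 := by positivity
  have hβ : 0 < σa ^ 2 := by positivity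
  have hρa : 0 < σ ^ 2 / (σ ^ 2 + σa ^ 2) := by positivity
  have hρb : 0 < σ ^ 2 / (σ ^ 2 + σb ^ 2) := by positivity
  have hva : 0 < condVar σ σa σb := by unfold condVar; positivity
  have hvb : 0 < condVar σ σb σa := by unfold condVar; positivity
  have Ia := integral_kern_eq_zero hσ hσa hσb hSb hma
  have Ib := integral_kern_eq_zero hσ hσb hσa hSa hmb
  have Ia' := integral_kern_eq_zero hσ hσa hσb hmb' hm'a
  have Ib' := integral_kern_eq_zero hσ hσb hσa hmin hm'b
  have h1 : m'a < ma := zero_lt_of_truncate_left hα hβ hρa hva hmbInt hmb' Ia Ia'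
  have h2 : m'a < ua := by
    have e1 := neg_left_of_zero hβ hmb' Ia'
    have e2 := pos_right_of_zero hα hSa Ib
    exact lt_of_mul_lt_mul_right (by linarith) hα.le
  refine ⟨lt_min h1 h2, ?_⟩
  rcases lt_or_ge la m'a with hla | hla
  · exact Or.inl ⟨hla, fun h => h.1.not_gt hla, fun h => h.1.not_gt hla⟩
  right
  rcases le_or_gt ua ma with hu | hu
  · rw [min_eq_right hu] at Ib'
    have heq : m'b = mb := zero_unique hβ hα hρb hvb hSa Ib' Ib
    refine Or.inl ⟨⟨hla, heq, fun sa sb ha hb => ⟨hla.trans_lt ha.1, heq ▸ hb.1⟩⟩, hla.not_gt,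
      fun h => h.2.1.ne' heq⟩
  · rw [min_eq_left hu.le] at Ib'
    have h3 : mb < m'b := lt_zero_of_truncate_right hβ hα hρb hvb hma' hu Ib Ib'
    have h4 : m'b < ub := by
      have e1 := neg_left_of_zero hα hma' Ib'
      have e2 := pos_right_of_zero hβ hmb' Ia'
      have e3 := mul_le_mul_of_nonneg_right hla hα.le
      exact lt_of_mul_lt_mul_right (by linarith) hβ.le
    exact Or.inr ⟨⟨hla, h3, h4⟩, hla.not_gt, fun h => h3.ne' h.2⟩
end
end

section
/- In the Gaussian signal model, consider the myopic-play dynamics started from S_a(0) = S_b(0) = ℝ with a fixed type pair (s_a, s_b) such that neither type is ever exactly equal to its current threshold. If the two players' actions differ at every date t, then there exists a player i such that the nested belief intervals satisfy ⋂_t S_i(t) = {s_i}; consequently, for each fixed value of s_b, there is at most one value of s_a for which disagreement occurs at every date, so perpetual disagreement occurs only on a Lebesgue-null set of type pairs. -/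
/-!
Put player `b`'s signal on player `a`'s scale: `x = s_a`, `y = -(σ_a²/σ_b²) s_b`. The posterior
mean is a positive multiple of `x - y`, so the threshold `m` of `a` is the barycentre of the
rescaled belief set `B` of `b` for a Gaussian weight (depending on `m`), and likewise the rescaled
threshold `n` of `b` is a barycentre of `A = S_a`. Disagreement means that `x > m` and `y > n` hold
together (an up-move) or `x < m` and `y < n` do (a down-move).

By reflection one may assume infinitely many up-moves. After an up-move at `t`, `A ⊆ [m t, ∞)` and
`B ⊆ [n t, ∞)`; as barycentres lie in the hull, `m t ≤ n s` and `n t ≤ m s` for all `s > t`. So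
the thresholds at up-moves have a common supremum `p`. If some `r > p` survived in every `B t`,
then `[p, r] ⊆ B t` for all `t`, whereas at late up-moves `B t` reaches only a tiny distance below
`p` and its barycentre `m t` is still at most `p`; this is impossible for a locally uniformly
positive weight (`Bary.no_collapse`). Hence `⋂ B = {p}`, symmetrically `⋂ A = {p}`, and `x = p = y`.

In particular perpetual disagreement forces `s_a σ_b² + s_b σ_a² = 0`, which determines `s_a`
from `s_b` and confines the disagreeing pairs to a line.
-/

open MeasureTheory Set Filter

noncomputable section

/-- The myopic-play dynamics for the fixed type pair `(sa, sb)`, started from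
`S_a(0) = S_b(0) = ℝ`: at each date the thresholds are the zeros of the conditional
expectations given the current belief sets (which have positive conditional mass),
a player of type above (below) her threshold plays `+1` (`-1`), and each belief set is
updated by intersecting with the half-line of types consistent with the observed action. -/
def MyopicDynamics (σ σa σb sa sb : ℝ) (Sa Sb : ℕ → Set ℝ) (ma mb : ℕ → ℝ) : Prop :=
  Sa 0 = univ ∧ Sb 0 = univ ∧
  (∀ t s, 0 < ∫ u in Sb t, phi σ σa σb s u) ∧
  (∀ t s, 0 < ∫ u in Sa t, phi σ σb σa s u) ∧
  (∀ t, Ea σ σa σb (ma t) (Sb t) = 0) ∧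
  (∀ t, Eb σ σa σb (mb t) (Sa t) = 0) ∧
  (∀ t, Sa (t + 1) = Sa t ∩ (if ma t < sa then Ici (ma t) else Iic (ma t))) ∧
  (∀ t, Sb (t + 1) = Sb t ∩ (if mb t < sb then Ici (mb t) else Iic (mb t)))

/-- Perpetual disagreement: the myopic-play dynamics can be run for the type pair
`(sa, sb)`, no type is ever exactly at its threshold, and the actions differ at every
date. -/
def PerpetualDisagreement (σ σa σb sa sb : ℝ) : Prop :=
  ∃ (Sa Sb : ℕ → Set ℝ) (ma mb : ℕ → ℝ),
    MyopicDynamics σ σa σb sa sb Sa Sb ma mb ∧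
    (∀ t, sa ≠ ma t ∧ sb ≠ mb t) ∧
    (∀ t, (ma t < sa ↔ ¬ mb t < sb))

/-! ### Barycentres for a family of weights -/

/-- A family `g m` of positive weights on the line, jointly continuous in the parameter and the
point, for which `u - m` is integrable against `g m`. -/
def GoodWeight (g : ℝ → ℝ → ℝ) : Prop :=
  Continuous (fun q : ℝ × ℝ => g q.1 q.2) ∧ (∀ m u, 0 < g m u) ∧
    ∀ m, Integrable (fun u => (u - m) * g m u)

/-- `m` is a barycentre of `B` for the weight `g m` that it itself selects. The set is required to
have positive `g m`-mass. -/
def Bary (g : ℝ → ℝ → ℝ) (m : ℝ) (B : Set ℝ) : Prop :=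
  MeasurableSet B ∧ 0 < ∫ u in B, g m u ∧ ∫ u in B, (u - m) * g m u = 0

theorem Bary.le_of_subset_Ici {g : ℝ → ℝ → ℝ} (hg : GoodWeight g) {m c : ℝ} {B : Set ℝ}
    (h : Bary g m B) (hB : B ⊆ Ici c) : c ≤ m := by
  by_contra! hlt
  obtain ⟨hm, hpos, h0⟩ := h
  -- a nonzero Bochner integral can only come from an integrable function
  have hi : IntegrableOn (g m) B := by
    by_contra hn
    rw [integral_undef hn] at hpos
    exact lt_irrefl _ hpos
  have h1 : ∫ u in B, (c - m) * g m u ≤ ∫ u in B, (u - m) * g m u := by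
    refine setIntegral_mono_on (hi.const_mul _) (hg.2.2 m).integrableOn hm ?_
    intro u hu
    have := hB hu
    exact mul_le_mul_of_nonneg_right (by simpa using this) (hg.2.1 m u).le
  rw [integral_const_mul, h0] at h1
  nlinarith [mul_pos (sub_pos.2 hlt) hpos]

/-- A set containing `[p, r]` and reaching only slightly below `p` has its barycentres above `p`. -/
theorem Bary.no_collapse {g : ℝ → ℝ → ℝ} (hg : GoodWeight g) {p r : ℝ} (hpr : p < r) :
    ∃ ε > 0, ∀ m B, Bary g m B → B ⊆ Ici (p - ε) → Icc p r ⊆ B → m ≤ p → False := by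
  -- uniform bounds `c ≤ g ≤ C` on a compact box containing all relevant arguments
  have hK : IsCompact (Icc (p - 1) p ×ˢ Icc (p - 1) r) := isCompact_Icc.prod isCompact_Icc
  have hne : (Icc (p - 1) p ×ˢ Icc (p - 1) r).Nonempty :=
    ⟨(p, p), ⟨⟨by linarith, le_rfl⟩, ⟨by linarith, hpr.le⟩⟩⟩
  obtain ⟨q0, -, hmin⟩ := hK.exists_isMinOn hne hg.1.continuousOn
  obtain ⟨q1, -, hmax⟩ := hK.exists_isMaxOn hne hg.1.continuousOn
  set c := g q0.1 q0.2 with hc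
  set C := g q1.1 q1.2 with hC
  have hc0 : 0 < c := hg.2.1 _ _
  have hC0 : 0 < C := hg.2.1 _ _
  -- `[q, r]` contributes at least `d`, the part of `B` below `p` at least `-C ε²`
  set q := (p + r) / 2 with hq
  set d := (q - p) * c * (r - q) with hd
  have hqp : p < q := by rw [hq]; linarith
  have hqr : q < r := by rw [hq]; linarith
  have hd0 : 0 < d := mul_pos (mul_pos (sub_pos.2 hqp) hc0) (sub_pos.2 hqr)
  refine ⟨min 1 (d / (2 * C)), by positivity, ?_⟩
  set ε := min 1 (d / (2 * C)) with hε
  have hε0 : 0 < ε := by positivity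
  have hε1 : ε ≤ 1 := min_le_left _ _
  have hεd : C * ε ≤ d / 2 := by
    have : ε ≤ d / (2 * C) := min_le_right _ _
    calc C * ε ≤ C * (d / (2 * C)) := by gcongr
      _ = d / 2 := by field_simp
  intro m B hB hBs hI hmp
  have hm : p - ε ≤ m := hB.le_of_subset_Ici hg hBs
  obtain ⟨hBm, -, h0⟩ := hB
  have hbd : ∀ u, p - ε ≤ u → u ≤ r → c ≤ g m u ∧ g m u ≤ C := by
    intro u h1 h2
    have hmem : (m, u) ∈ Icc (p - 1) p ×ˢ Icc (p - 1) r :=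
      ⟨⟨by linarith, hmp⟩, ⟨by linarith, h2⟩⟩
    exact ⟨hmin hmem, hmax hmem⟩
  have hint : Integrable (fun u => (u - m) * g m u) := hg.2.2 m
  have hsplit := setIntegral_union (μ := volume) (f := fun u => (u - m) * g m u)
    (s := B ∩ Iio p) (t := B ∩ Ici p)
    (Set.disjoint_left.2 fun u h1 h2 => (lt_of_lt_of_le (mem_Iio.1 h1.2) (mem_Ici.1 h2.2)).false) (hBm.inter measurableSet_Ici)
    hint.integrableOn hint.integrableOn
  have hU : B ∩ Iio p ∪ B ∩ Ici p = B := by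
    rw [← inter_union_distrib_left, Iio_union_Ici, inter_univ]
  rw [hU, h0] at hsplit
  have hsub : B ∩ Iio p ⊆ Icc (p - ε) p := fun u hu => ⟨hBs hu.1, (le_of_lt hu.2)⟩
  have hvol : volume (B ∩ Iio p) < ⊤ :=
    (measure_mono hsub).trans_lt (by simp)
  have hlow := norm_setIntegral_le_of_norm_le_const (μ := volume) (C := ε * C)
    (f := fun u => (u - m) * g m u) hvol (by
      intro u hu
      have h1 := hsub hu
      rw [Real.norm_eq_abs, abs_mul, abs_of_pos (hg.2.1 m u)]
      have h2 : |u - m| ≤ ε := abs_le.2 ⟨by linarith [h1.1], by linarith [h1.2]⟩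
      exact mul_le_mul h2 (hbd u h1.1 (h1.2.trans hpr.le)).2 (hg.2.1 m u).le hε0.le)
  have hvr : volume.real (B ∩ Iio p) ≤ ε := by
    have := measureReal_mono (μ := volume) hsub (by simp)
    simpa [Real.volume_real_Icc_of_le, hε0.le] using this
  have hhigh1 : ∫ u in Icc q r, (u - m) * g m u ≤ ∫ u in B ∩ Ici p, (u - m) * g m u := by
    refine setIntegral_mono_set hint.integrableOn ?_ ?_
    · refine (ae_restrict_iff' (hBm.inter measurableSet_Ici)).2 (Eventually.of_forall ?_)
      intro u hu
      have : p ≤ u := hu.2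
      exact mul_nonneg (by linarith) (hg.2.1 m u).le
    · refine LE.le.eventuallyLE (show Icc q r ⊆ B ∩ Ici p from ?_)
      intro u hu
      exact ⟨hI ⟨hqp.le.trans hu.1, hu.2⟩, hqp.le.trans hu.1⟩
  have hhigh2 : d ≤ ∫ u in Icc q r, (u - m) * g m u := by
    have h1 : ∫ _ in Icc q r, (q - p) * c ≤ ∫ u in Icc q r, (u - m) * g m u := by
      refine setIntegral_mono_on (integrableOn_const (by simp)) hint.integrableOn measurableSet_Icc ?_
      intro u hu
      exact mul_le_mul (by linarith [hu.1]) (hbd u (by linarith [hu.1]) hu.2).1 hc0.le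
        (by linarith [hu.1])
    rw [setIntegral_const, Real.volume_real_Icc_of_le hqr.le, smul_eq_mul] at h1
    rw [hd]; linarith
  rw [Real.norm_eq_abs] at hlow
  have h3 : ε * C * volume.real (B ∩ Iio p) ≤ d / 2 := by
    calc ε * C * volume.real (B ∩ Iio p) ≤ ε * C * 1 := by
          gcongr; exact hvr.trans hε1
      _ ≤ d / 2 := by linarith
  have := (abs_le.1 (hlow.trans h3)).1
  linarith

theorem setIntegral_preimage_mul {k : ℝ} {S : Set ℝ} (hS : MeasurableSet S)
    (H : ℝ → ℝ) :
    ∫ z in (fun z => k * z) ⁻¹' S, H (k * z) = |k⁻¹| * ∫ u in S, H u := by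
  rw [← integral_indicator (hS.preimage (measurable_const_mul k)), ← integral_indicator hS,
    ← smul_eq_mul, ← Measure.integral_comp_mul_left]
  rfl

theorem GoodWeight.reflect {g : ℝ → ℝ → ℝ} (hg : GoodWeight g) :
    GoodWeight (fun m u => g (-m) (-u)) := by
  refine ⟨?_, fun m u => hg.2.1 _ _, fun m => ?_⟩
  · exact hg.1.comp (continuous_fst.neg.prodMk continuous_snd.neg)
  · have := (hg.2.2 (-m)).comp_neg.neg
    refine this.congr (Eventually.of_forall fun u => ?_)
    simp only [Pi.neg_apply]
    ring

theorem Bary.reflect {g : ℝ → ℝ → ℝ} {m : ℝ} {B : Set ℝ} (h : Bary g m B) :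
    Bary (fun m u => g (-m) (-u)) (-m) ((fun z => -1 * z) ⁻¹' B) := by
  obtain ⟨hB, hpos, h0⟩ := h
  refine ⟨hB.preimage (measurable_const_mul _), ?_, ?_⟩
  · have := setIntegral_preimage_mul (k := -1) hB (g m)
    simp only [neg_neg, neg_mul, one_mul] at this ⊢
    rw [this]
    simpa using hpos
  · have := setIntegral_preimage_mul (k := -1) hB (fun u => -((u - m) * g m u))
    have h3 : ∫ u in B, -((u - m) * g m u) = 0 := by rw [integral_neg, h0, neg_zero]
    rw [h3, mul_zero] at this
    simp only [neg_neg, neg_mul, one_mul] at this ⊢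
    rw [← this]
    congr 1
    funext u
    ring

/-! ### The disagreement dynamics on a common scale -/

/-- One player's side of the rescaled dynamics: `A t` starts from `ℝ` and is cut at `m t` to the
side containing `x`; `T` is the set of dates at which this is the upper side. -/
def CutSeq (T : Set ℕ) (x : ℝ) (A : ℕ → Set ℝ) (m : ℕ → ℝ) : Prop :=
  A 0 = univ ∧ (∀ t ∈ T, m t < x ∧ A (t + 1) = A t ∩ Ici (m t)) ∧
    ∀ t ∉ T, x < m t ∧ A (t + 1) = A t ∩ Iic (m t)

theorem CutSeq.mem {T : Set ℕ} {x : ℝ} {A : ℕ → Set ℝ} {m : ℕ → ℝ} (h : CutSeq T x A m)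
    (t : ℕ) : x ∈ A t := by
  induction t with
  | zero => rw [h.1]; trivial
  | succ t ih =>
    by_cases ht : t ∈ T
    · rw [(h.2.1 t ht).2]; exact ⟨ih, (h.2.1 t ht).1.le⟩
    · rw [(h.2.2 t ht).2]; exact ⟨ih, (h.2.2 t ht).1.le⟩

theorem CutSeq.antitone {T : Set ℕ} {x : ℝ} {A : ℕ → Set ℝ} {m : ℕ → ℝ}
    (h : CutSeq T x A m) : Antitone A := by
  refine antitone_nat_of_succ_le fun t => ?_
  by_cases ht : t ∈ T
  · rw [(h.2.1 t ht).2]; exact inter_subset_left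
  · rw [(h.2.2 t ht).2]; exact inter_subset_left

theorem CutSeq.subset_Ici {T : Set ℕ} {x : ℝ} {A : ℕ → Set ℝ} {m : ℕ → ℝ}
    (h : CutSeq T x A m) {t s : ℕ} (ht : t ∈ T) (hts : t < s) : A s ⊆ Ici (m t) := by
  refine (h.antitone (Nat.succ_le_of_lt hts)).trans ?_
  rw [Nat.succ_eq_add_one, (h.2.1 t ht).2]
  exact inter_subset_right

/-- Up-moves cut below `p` and down-moves never cut below a surviving point `r`. -/
theorem CutSeq.Icc_subset {T : Set ℕ} {x p r : ℝ} {A : ℕ → Set ℝ} {m : ℕ → ℝ}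
    (h : CutSeq T x A m) (hp : ∀ t ∈ T, m t ≤ p) (hr : ∀ t, r ∈ A t) (t : ℕ) :
    Icc p r ⊆ A t := by
  induction t with
  | zero => rw [h.1]; exact subset_univ _
  | succ t ih =>
    by_cases ht : t ∈ T
    · rw [(h.2.1 t ht).2]
      exact fun u hu => ⟨ih hu, (hp t ht).trans hu.1⟩
    · have h1 := hr (t + 1)
      rw [(h.2.2 t ht).2] at h1 ⊢
      exact fun u hu => ⟨ih hu, hu.2.trans h1.2⟩

/-- If at up-moves the cuts `n` have supremum `p` and the barycentres `m` are at most `p`, then no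
point other than `p` survives all the cuts. -/
theorem CutSeq.eq_of_isLUB {T : Set ℕ} (hT : T.Infinite) {g : ℝ → ℝ → ℝ} (hg : GoodWeight g)
    {y p : ℝ} {B : ℕ → Set ℝ} {m n : ℕ → ℝ} (h : CutSeq T y B n) (hb : ∀ t, Bary g (m t) (B t))
    (hn : IsLUB (n '' T) p) (hm : ∀ t ∈ T, m t ≤ p) {r : ℝ} (hr : ∀ t, r ∈ B t) : r = p := by
  have hnp : ∀ t ∈ T, n t ≤ p := fun t ht => hn.1 ⟨t, ht, rfl⟩
  have key : ∀ e > 0, ∃ t ∈ T, p - e < n t := by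
    intro e he
    obtain ⟨_, ⟨t, ht, rfl⟩, h1, -⟩ := hn.exists_between (sub_lt_self p he)
    exact ⟨t, ht, h1⟩
  rcases lt_trichotomy r p with hlt | heq | hgt
  · obtain ⟨t, ht, h1⟩ := key (p - r) (sub_pos.2 hlt)
    have h2 : n t ≤ r := h.subset_Ici ht (Nat.lt_succ_self t) (hr (t + 1))
    linarith
  · exact heq
  · obtain ⟨ε, hε, H⟩ := Bary.no_collapse hg hgt
    obtain ⟨t, ht, h1⟩ := key ε hε
    obtain ⟨s, hs, hts⟩ := hT.exists_gt t
    exact (H (m s) (B s) (hb s) ((h.subset_Ici ht hts).trans (Ici_subset_Ici.2 h1.le))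
      (h.Icc_subset hnp hr s) (hm s hs)).elim

/-- With infinitely many up-moves both belief sequences shrink to one and the same point. -/
theorem CutSeq.collapse_up {T : Set ℕ} (hT : T.Infinite) {ga gb : ℝ → ℝ → ℝ}
    (hga : GoodWeight ga) (hgb : GoodWeight gb) {x y : ℝ} {A B : ℕ → Set ℝ} {m n : ℕ → ℝ}
    (hA : CutSeq T x A m) (hB : CutSeq T y B n) (ha : ∀ t, Bary ga (m t) (B t))
    (hb : ∀ t, Bary gb (n t) (A t)) :
    x = y ∧ (∀ r, (∀ t, r ∈ A t) → r = x) ∧ (∀ r, (∀ t, r ∈ B t) → r = y) := by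
  have hmn : ∀ t ∈ T, ∀ s, t < s → m t ≤ n s := fun t ht s hts =>
    (hb s).le_of_subset_Ici hgb (hA.subset_Ici ht hts)
  have hnm : ∀ t ∈ T, ∀ s, t < s → n t ≤ m s := fun t ht s hts =>
    (ha s).le_of_subset_Ici hga (hB.subset_Ici ht hts)
  have hne : (m '' T).Nonempty := hT.nonempty.image _
  have hbd : BddAbove (m '' T) :=
    ⟨x, by rintro _ ⟨t, ht, rfl⟩; exact (hA.2.1 t ht).1.le⟩
  obtain ⟨p, hp⟩ := Real.exists_isLUB hne hbd
  have hp' : IsLUB (n '' T) p := by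
    constructor
    · rintro _ ⟨t, ht, rfl⟩
      obtain ⟨s, hs, hts⟩ := hT.exists_gt t
      exact (hnm t ht s hts).trans (hp.1 ⟨s, hs, rfl⟩)
    · intro c hc
      refine hp.2 ?_
      rintro _ ⟨t, ht, rfl⟩
      obtain ⟨s, hs, hts⟩ := hT.exists_gt t
      exact (hmn t ht s hts).trans (hc ⟨s, hs, rfl⟩)
  have h1 : ∀ r, (∀ t, r ∈ A t) → r = p := fun r hr =>
    hA.eq_of_isLUB hT hgb hb hp (fun t ht => hp'.1 ⟨t, ht, rfl⟩) hr
  have h2 : ∀ r, (∀ t, r ∈ B t) → r = p := fun r hr =>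
    hB.eq_of_isLUB hT hga ha hp' (fun t ht => hp.1 ⟨t, ht, rfl⟩) hr
  have hx := h1 x hA.mem
  have hy := h2 y hB.mem
  exact ⟨hx.trans hy.symm, fun r hr => (h1 r hr).trans hx.symm,
    fun r hr => (h2 r hr).trans hy.symm⟩

theorem CutSeq.reflect {T : Set ℕ} {x : ℝ} {A : ℕ → Set ℝ} {m : ℕ → ℝ} (h : CutSeq T x A m) :
    CutSeq Tᶜ (-x) (fun t => (fun z => -1 * z) ⁻¹' A t) (fun t => -m t) := by
  refine ⟨by simp [h.1], fun t ht => ?_, fun t ht => ?_⟩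
  · obtain ⟨h1, h2⟩ := h.2.2 t ht
    refine ⟨neg_lt_neg h1, ?_⟩
    ext z
    simp only [h2, mem_preimage, mem_inter_iff, mem_Iic, mem_Ici, neg_mul, one_mul]
    rw [neg_le]
  · obtain ⟨h1, h2⟩ := h.2.1 t (not_not.1 ht)
    refine ⟨neg_lt_neg h1, ?_⟩
    ext z
    simp only [h2, mem_preimage, mem_inter_iff, mem_Iic, mem_Ici, neg_mul, one_mul]
    rw [le_neg]

theorem CutSeq.collapse {T : Set ℕ} {ga gb : ℝ → ℝ → ℝ}
    (hga : GoodWeight ga) (hgb : GoodWeight gb) {x y : ℝ} {A B : ℕ → Set ℝ} {m n : ℕ → ℝ}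
    (hA : CutSeq T x A m) (hB : CutSeq T y B n) (ha : ∀ t, Bary ga (m t) (B t))
    (hb : ∀ t, Bary gb (n t) (A t)) :
    x = y ∧ (∀ r, (∀ t, r ∈ A t) → r = x) ∧ (∀ r, (∀ t, r ∈ B t) → r = y) := by
  by_cases hT : T.Infinite
  · exact hA.collapse_up hT hga hgb hB ha hb
  · have hT' : Tᶜ.Infinite := (not_infinite.1 hT).infinite_compl
    obtain ⟨h1, h2, h3⟩ := hA.reflect.collapse_up hT' hga.reflect hgb.reflect hB.reflect
      (fun t => (ha t).reflect) (fun t => (hb t).reflect)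
    refine ⟨neg_injective h1, fun r hr => ?_, fun r hr => ?_⟩
    · exact neg_injective (h2 (-r) fun t => by simpa using hr t)
    · exact neg_injective (h3 (-r) fun t => by simpa using hr t)

/-! ### The Gaussian model -/

theorem phi_cond_var_pos {σ σa σb : ℝ} (hσ : 0 < σ) (hσa : 0 < σa) (hσb : 0 < σb) :
    0 < (σa ^ 2 * σb ^ 2 + σ ^ 2 * (σa ^ 2 + σb ^ 2)) / (σ ^ 2 + σa ^ 2) := by
  positivity

theorem phi_pos {σ σa σb : ℝ} (hσ : 0 < σ) (hσa : 0 < σa) (hσb : 0 < σb) (s u : ℝ) :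
    0 < phi σ σa σb s u := by
  have := phi_cond_var_pos hσ hσa hσb
  unfold phi
  positivity

theorem phi_continuous (σ σa σb : ℝ) :
    Continuous (fun q : ℝ × ℝ => phi σ σa σb q.1 q.2) := by
  unfold phi
  fun_prop

theorem integrable_sub_mul_phi {σ σa σb : ℝ} (hσ : 0 < σ) (hσa : 0 < σa) (hσb : 0 < σb)
    (s c : ℝ) : Integrable (fun u => (u - c) * phi σ σa σb s u) := by
  have hv := phi_cond_var_pos hσ hσa hσb
  unfold phi
  set v := (σa ^ 2 * σb ^ 2 + σ ^ 2 * (σa ^ 2 + σb ^ 2)) / (σ ^ 2 + σa ^ 2)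
  set μ := s * σ ^ 2 / (σ ^ 2 + σa ^ 2)
  have hb : 0 < (2 * v)⁻¹ := by positivity
  have h1 := (integrable_mul_exp_neg_mul_sq hb).comp_sub_right μ
  have h2 := ((integrable_exp_neg_mul_sq hb).comp_sub_right μ).const_mul (μ - c)
  refine ((h1.add h2).div_const (Real.sqrt (2 * Real.pi * v))).congr
    (Eventually.of_forall fun u => ?_)
  have e : -(2 * v)⁻¹ * (u - μ) ^ 2 = -(u - μ) ^ 2 / (2 * v) := by
    rw [div_eq_inv_mul]; ring
  simp only [Pi.add_apply, e]
  ring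

theorem goodWeight_b {σ σa σb : ℝ} (hσ : 0 < σ) (hσa : 0 < σa) (hσb : 0 < σb) (j : ℝ) :
    GoodWeight (fun n u => phi σ σb σa (-j * n) u) := by
  refine ⟨?_, fun m u => phi_pos hσ hσb hσa _ _, fun m => integrable_sub_mul_phi hσ hσb hσa _ _⟩
  exact (phi_continuous σ σb σa).comp (by fun_prop : Continuous fun q : ℝ × ℝ => (-j * q.1, q.2))

theorem goodWeight_a {σ σa σb : ℝ} (hσ : 0 < σ) (hσa : 0 < σa) (hσb : 0 < σb) {j : ℝ}
    (hj : 0 < j) : GoodWeight (fun m z => phi σ σa σb m (-j * z)) := by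
  refine ⟨?_, fun m u => phi_pos hσ hσa hσb _ _, fun m => ?_⟩
  · exact (phi_continuous σ σa σb).comp
      (by fun_prop : Continuous fun q : ℝ × ℝ => (q.1, -j * q.2))
  · have h := ((integrable_sub_mul_phi hσ hσa hσb m (-j * m)).comp_mul_left'
      (R := -j) (by linarith [hj] : -j ≠ 0)).const_mul (-j)⁻¹
    refine h.congr (Eventually.of_forall fun u => ?_)
    have : j ≠ 0 := hj.ne'
    simp only
    field_simp
    ring

/-- Perpetual disagreement confines the type pair to a line, and the belief sets about `a` collapse
to her type. -/
theorem disagreement_collapse {σ σa σb : ℝ} (hσ : 0 < σ) (hσa : 0 < σa) (hσb : 0 < σb)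
    {sa sb : ℝ} {Sa Sb : ℕ → Set ℝ} {ma mb : ℕ → ℝ}
    (hdyn : MyopicDynamics σ σa σb sa sb Sa Sb ma mb)
    (hne : ∀ t, sa ≠ ma t ∧ sb ≠ mb t)
    (hdis : ∀ t, (ma t < sa ↔ ¬ mb t < sb)) :
    sa * σb ^ 2 + sb * σa ^ 2 = 0 ∧ (⋂ t, Sa t) = {sa} := by
  obtain ⟨ha0, hb0, hpb, hpa, hEa, hEb, hSa, hSb⟩ := hdyn
  set j := σb ^ 2 / σa ^ 2 with hjdef
  have hj : 0 < j := by positivity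
  have hj0 : j ≠ 0 := hj.ne'
  have hjs : j * σa ^ 2 = σb ^ 2 := by rw [hjdef]; field_simp
  set D := σa ^ 2 * σb ^ 2 + σ ^ 2 * (σa ^ 2 + σb ^ 2) with hD
  have hD0 : 0 < D := by positivity
  have hmA : ∀ t, MeasurableSet (Sa t) := by
    intro t
    induction t with
    | zero => rw [ha0]; exact MeasurableSet.univ
    | succ t ih =>
      rw [hSa t]
      split_ifs
      exacts [ih.inter measurableSet_Ici, ih.inter measurableSet_Iic]
  have hmB : ∀ t, MeasurableSet (Sb t) := by
    intro t
    induction t with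
    | zero => rw [hb0]; exact MeasurableSet.univ
    | succ t ih =>
      rw [hSb t]
      split_ifs
      exacts [ih.inter measurableSet_Ici, ih.inter measurableSet_Iic]
  have hA : CutSeq {t | ma t < sa} sa Sa ma := by
    refine ⟨ha0, fun t ht => ⟨ht, ?_⟩, fun t ht => ⟨?_, ?_⟩⟩
    · rw [hSa t, if_pos (show ma t < sa from ht)]
    · exact lt_of_le_of_ne (not_lt.1 ht) (hne t).1
    · rw [hSa t, if_neg (show ¬ ma t < sa from ht)]
  -- the scale change `u = -j z` reverses order, so `b` playing `-1` becomes an up-move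
  have hB : CutSeq {t | ma t < sa} (-(sb / j)) (fun t => (fun z => -j * z) ⁻¹' Sb t)
      (fun t => -(mb t / j)) := by
    refine ⟨by simp [hb0], fun t ht => ?_, fun t ht => ?_⟩
    · have h1 := (hdis t).1 ht
      have h2 : sb < mb t := lt_of_le_of_ne (not_lt.1 h1) (hne t).2
      refine ⟨neg_lt_neg (div_lt_div_of_pos_right h2 hj), ?_⟩
      ext z
      simp only [hSb t, if_neg h1, mem_preimage, mem_inter_iff, mem_Iic, mem_Ici]
      rw [neg_le, le_div_iff₀ hj]
      have : -z * j = -j * z := by ring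
      rw [this]
    · have h1 : mb t < sb := by
        by_contra h
        exact ht ((hdis t).2 h)
      refine ⟨neg_lt_neg (div_lt_div_of_pos_right h1 hj), ?_⟩
      ext z
      simp only [hSb t, if_pos h1, mem_preimage, mem_inter_iff, mem_Iic, mem_Ici]
      rw [le_neg, div_le_iff₀ hj]
      have : -z * j = -j * z := by ring
      rw [this]
  have hba : ∀ t, Bary (fun m z => phi σ σa σb m (-j * z)) (ma t)
      ((fun z => -j * z) ⁻¹' Sb t) := by
    intro t
    refine ⟨(hmB t).preimage (measurable_const_mul _), ?_, ?_⟩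
    · rw [setIntegral_preimage_mul (k := -j) (hmB t) (fun u => phi σ σa σb (ma t) u)]
      exact mul_pos (abs_pos.2 (inv_ne_zero (neg_ne_zero.2 hj0))) (hpb t (ma t))
    · have h1 : ∫ u in Sb t, postMean σ σa σb (ma t) u * phi σ σa σb (ma t) u = 0 := by
        have := hEa t
        unfold Ea at this
        exact (div_eq_zero_iff.1 this).resolve_right (hpb t _).ne'
      have h2 := setIntegral_preimage_mul (k := -j) (hmB t)
        (fun u => -(D / (σ ^ 2 * σb ^ 2)) * (postMean σ σa σb (ma t) u * phi σ σa σb (ma t) u))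
      have h3 : ∫ u in Sb t, -(D / (σ ^ 2 * σb ^ 2)) *
          (postMean σ σa σb (ma t) u * phi σ σa σb (ma t) u) = 0 := by
        rw [integral_const_mul, h1, mul_zero]
      rw [h3, mul_zero] at h2
      rw [← h2]
      congr 1
      funext z
      unfold postMean
      rw [← hD]
      have e : ma t * σb ^ 2 + -j * z * σa ^ 2 = σb ^ 2 * (ma t - z) := by
        linear_combination (-z) * hjs
      rw [e]
      field_simp
      ring
  have hbb : ∀ t, Bary (fun n u => phi σ σb σa (-j * n) u) (-(mb t / j)) (Sa t) := by
    intro t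
    have hmb : -j * -(mb t / j) = mb t := by field_simp
    refine ⟨hmA t, ?_, ?_⟩
    · simp only [hmb]
      exact hpa t _
    · simp only [hmb]
      have h1 : ∫ u in Sa t, postMean σ σa σb u (mb t) * phi σ σb σa (mb t) u = 0 := by
        have := hEb t
        unfold Eb at this
        exact (div_eq_zero_iff.1 this).resolve_right (hpa t _).ne'
      have h2 : ∫ u in Sa t, (D / (σ ^ 2 * σb ^ 2)) *
          (postMean σ σa σb u (mb t) * phi σ σb σa (mb t) u) = 0 := by
        rw [integral_const_mul, h1, mul_zero]
      rw [← h2]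
      congr 1
      funext u
      unfold postMean
      rw [← hD]
      have e : u * σb ^ 2 + mb t * σa ^ 2 = σb ^ 2 * (u - -(mb t / j)) := by
        rw [← hjs]; field_simp; ring
      rw [e]
      field_simp
  obtain ⟨hxy, h1, -⟩ := hA.collapse (goodWeight_a hσ hσa hσb hj) (goodWeight_b hσ hσa hσb j)
    hB hba hbb
  refine ⟨?_, ?_⟩
  · rw [hxy, ← hjs]; field_simp; ring
  · ext r
    simp only [mem_iInter, mem_singleton_iff]
    exact ⟨h1 r, fun h => h ▸ hA.mem⟩

theorem volume_line {a b : ℝ} (hb : b ≠ 0) :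
    volume {p : ℝ × ℝ | p.1 * a + p.2 * b = 0} = 0 := by
  have hm : MeasurableSet {p : ℝ × ℝ | p.1 * a + p.2 * b = 0} :=
    (isClosed_eq (by fun_prop) continuous_const).measurableSet
  rw [Measure.volume_eq_prod, Measure.measure_prod_null hm]
  refine Eventually.of_forall fun x => ?_
  refine measure_mono_null (t := {-(x * a) / b}) ?_ (by simp)
  intro y hy
  simp only [mem_preimage, mem_ofPred_eq] at hy
  rw [mem_singleton_iff, eq_div_iff hb]
  linarith

/-- if the actions differ at every date under the myopic-play dynamics,
then some player's nested belief intervals shrink to exactly her type; consequently, for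
each fixed `sb` there is at most one `sa` giving perpetual disagreement, and perpetual
disagreement occurs only on a Lebesgue-null set of type pairs. -/
theorem stmt9 (σ σa σb : ℝ) (hσ : 0 < σ) (hσa : 0 < σa) (hσb : 0 < σb)
    (sa sb : ℝ) (Sa Sb : ℕ → Set ℝ) (ma mb : ℕ → ℝ)
    (hdyn : MyopicDynamics σ σa σb sa sb Sa Sb ma mb)
    (hne : ∀ t, sa ≠ ma t ∧ sb ≠ mb t)
    (hdis : ∀ t, (ma t < sa ↔ ¬ mb t < sb)) :
    ((⋂ t, Sa t) = {sa} ∨ (⋂ t, Sb t) = {sb}) ∧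
    (∀ sb' : ℝ, {sa' : ℝ | PerpetualDisagreement σ σa σb sa' sb'}.Subsingleton) ∧
    volume {p : ℝ × ℝ | PerpetualDisagreement σ σa σb p.1 p.2} = 0 := by
  refine ⟨Or.inl (disagreement_collapse hσ hσa hσb hdyn hne hdis).2, ?_, ?_⟩
  · rintro sb' s₁ ⟨_, _, _, _, hd₁, hn₁, hi₁⟩ s₂ ⟨_, _, _, _, hd₂, hn₂, hi₂⟩
    have e₁ := (disagreement_collapse hσ hσa hσb hd₁ hn₁ hi₁).1
    have e₂ := (disagreement_collapse hσ hσa hσb hd₂ hn₂ hi₂).1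
    have hb : σb ^ 2 ≠ 0 := by positivity
    exact mul_right_cancel₀ hb (by linarith)
  · refine measure_mono_null ?_ (volume_line (a := σb ^ 2) (b := σa ^ 2) (by positivity))
    rintro ⟨s, s'⟩ ⟨_, _, _, _, hd, hn, hi⟩
    exact (disagreement_collapse hσ hσa hσb hd hn hi).1
end
end
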